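/- arXiv:1609.07670 — 2 statements merged into one kernel-verified Lean document; each statement's English description precedes it below -/
import Mathlib

section
/- For every integer n ≥ 3, r_3(4, 3; B_{n−1,2}) ≤ 3n − 3: every red/blue coloring of the 3-element subsets of {1,...,3n−3} contains a blue ordered copy of the 3-uniform broom B_{n−1,2} or a set of 4 vertices spanning at least 3 red triples. -/
/-!
Fix a coloring of the triples of `{1,...,M}` in which every 4-set spans at most two red triples.
By induction on `a ≥ 2`, the first `3a` vertices contain a blue broom `B_{a,2}`.

The base case `a = 2` is a direct check on six vertices.  For the step, let `v_a` be the last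
path vertex, `p < q` the two leaves, and `x < y < z` three new vertices.  If `(v_a, p)` or
`(v_a, q)` has two blue extensions to the right, the path can be prolonged by `p` or `q`.
Otherwise `(v_a, p)` and `(v_a, q)` each have at least two red extensions in `{x, y, z}`, so they
share one; sparsity of red forces `v_a p q` to be blue, hence `v_a p` is red to all of `x, y, z`,
and `(v_a, q)` is red to two of them, say `s < t`.  Sparsity on `{v_a, p, q, s}` and
`{v_a, p, q, t}` makes `p q s` and `p q t` blue, so `v_2, ..., v_a, p, q` with leaves `s, t` is a
broom `B_{a+1,2}`.
-/

/-!
Colorings are maps from finite sets of naturals to `Bool`,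
with `true` = red and `false` = blue.  All structures live inside
the vertex set `{1, ..., N}`, i.e. `Finset.Icc 1 N`.
-/

/-- A blue ordered copy of the `k`-uniform tight path on `n` vertices inside `{1,...,N}`:
a strictly increasing sequence `x 0 < x 1 < ⋯ < x (n-1)` of elements of `{1,...,N}`
all of whose consecutive `k`-element windows are blue. -/
def HasBlueTightPath (k n N : ℕ) (χ : Finset ℕ → Bool) : Prop :=
  ∃ x : ℕ → ℕ, StrictMono x ∧ (∀ i < n, x i ∈ Finset.Icc 1 N) ∧
    ∀ j, j + k ≤ n → χ ((Finset.range k).image fun i => x (j + i)) = false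

/-- A red copy of the complete `k`-uniform hypergraph on `s` vertices inside `{1,...,N}`:
a set of `s` vertices all of whose `k`-element subsets are red. -/
def HasRedClique (k s N : ℕ) (χ : Finset ℕ → Bool) : Prop :=
  ∃ S : Finset ℕ, S ⊆ Finset.Icc 1 N ∧ S.card = s ∧
    ∀ e ⊆ S, e.card = k → χ e = true

/-- The Ramsey number `r_k(s, P_n)`. -/
noncomputable def cliquePathRamsey (k s n : ℕ) : ℕ :=
  sInf {N | ∀ χ : Finset ℕ → Bool, HasRedClique k s N χ ∨ HasBlueTightPath k n N χ}

/-- An ordered copy of the path power `P_m^ℓ` in color `c` inside `{1,...,N}`: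
a strictly increasing sequence `x 0 < ⋯ < x (m-1)` in `{1,...,N}` with
`χ {x i, x j} = c` whenever `i < j < m` and `j - i ≤ ℓ`. -/
def HasPowPath (ℓ m N : ℕ) (c : Bool) (χ : Finset ℕ → Bool) : Prop :=
  ∃ x : ℕ → ℕ, StrictMono x ∧ (∀ i < m, x i ∈ Finset.Icc 1 N) ∧
    ∀ i j, i < j → j < m → j - i ≤ ℓ → χ {x i, x j} = c

/-- The ordered Ramsey number `r(P_a^ℓ, P_b^ℓ)`. -/
noncomputable def powPathRamsey (ℓ a b : ℕ) : ℕ :=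
  sInf {N | ∀ χ : Finset ℕ → Bool, HasPowPath ℓ a N true χ ∨ HasPowPath ℓ b N false χ}

/-- A set of `s` vertices inside `{1,...,N}` spanning at least `t` red `k`-element subsets. -/
def HasRedSpread (k s t N : ℕ) (χ : Finset ℕ → Bool) : Prop :=
  ∃ S : Finset ℕ, S ⊆ Finset.Icc 1 N ∧ S.card = s ∧
    t ≤ ((Finset.powersetCard k S).filter fun e => χ e = true).card

/-- The Ramsey number `r_k(s, t; P_n)`. -/
noncomputable def spreadPathRamsey (k s t n : ℕ) : ℕ :=
  sInf {N | ∀ χ : Finset ℕ → Bool, HasRedSpread k s t N χ ∨ HasBlueTightPath k n N χ}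

/-- A set `S` of `k+1` vertices inside `{1,...,N}` spanning at least `t` red `k`-element
subsets, one of which consists of the `k` smallest vertices of `S` (i.e. `S` minus its
maximum element `v`). -/
def HasRedInitialSpread (k t N : ℕ) (χ : Finset ℕ → Bool) : Prop :=
  ∃ S : Finset ℕ, S ⊆ Finset.Icc 1 N ∧ S.card = k + 1 ∧
    (∃ v ∈ S, (∀ u ∈ S, u ≤ v) ∧ χ (S.erase v) = true) ∧
    t ≤ ((Finset.powersetCard k S).filter fun e => χ e = true).card

/-- The Ramsey number `f_k(k+1, t; P_n)`: the minimum `N` such that every coloring of the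
`k`-sets of `{1,...,N}` has a blue tight path on `n` vertices or a set of `k+1` vertices
spanning at least `t` red `k`-sets, one of which consists of its `k` smallest vertices. -/
noncomputable def initialSpreadPathRamsey (k t n : ℕ) : ℕ :=
  sInf {N | ∀ χ : Finset ℕ → Bool, HasRedInitialSpread k t N χ ∨ HasBlueTightPath k n N χ}

/-- A blue ordered copy of the `k`-uniform broom `B_{a,m}` inside `{1,...,N}`:
vertices `v 0 < ⋯ < v (a-1) < w 0 < ⋯ < w (m-1)`, every consecutive `k`-window of the
`v`'s is blue, and (provided `a ≥ k-1`) for each `j` the `k`-set consisting of the last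
`k-1` of the `v`'s together with `w j` is blue. -/
def HasBlueBroom (k a m N : ℕ) (χ : Finset ℕ → Bool) : Prop :=
  ∃ v w : ℕ → ℕ, StrictMono v ∧ StrictMono w ∧
    (∀ i < a, v i ∈ Finset.Icc 1 N) ∧ (∀ j < m, w j ∈ Finset.Icc 1 N) ∧
    (∀ i < a, ∀ j < m, v i < w j) ∧
    (∀ j, j + k ≤ a → χ ((Finset.range k).image fun i => v (j + i)) = false) ∧
    (k - 1 ≤ a → ∀ j < m,
      χ (insert (w j) ((Finset.range (k - 1)).image fun i => v (a - (k - 1) + i))) = false)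

/-- The Ramsey number `r_3(4, 3; B_{a,m})` for the `3`-uniform broom. -/
noncomputable def spreadBroomRamsey3 (a m : ℕ) : ℕ :=
  sInf {N | ∀ χ : Finset ℕ → Bool, HasRedSpread 3 4 3 N χ ∨ HasBlueBroom 3 a m N χ}

/-- The tower function: `twr 1 x = x` and `twr (i+1) x = 2 ^ twr i x`. -/
def twr (i x : ℕ) : ℕ := (fun y => 2 ^ y)^[i - 1] x

/-- The real tower function: `rtwr 1 x = x` and `rtwr (i+1) x = 2 ^ rtwr i x`. -/
noncomputable def rtwr (i : ℕ) (x : ℝ) : ℝ := (fun y => (2 : ℝ) ^ y)^[i - 1] x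

/-- Every four vertices of `{1,...,M}` span at most two red triples. -/
def RedSparse (M : ℕ) (χ : Finset ℕ → Bool) : Prop :=
  ∀ a b c d, 1 ≤ a → a < b → b < c → c < d → d ≤ M →
    (χ {a, b, c} = true → χ {a, b, d} = true → χ {a, c, d} = false) ∧
    (χ {a, b, c} = true → χ {a, b, d} = true → χ {b, c, d} = false) ∧
    (χ {a, b, c} = true → χ {a, c, d} = true → χ {b, c, d} = false) ∧
    (χ {a, b, d} = true → χ {a, c, d} = true → χ {b, c, d} = false)

lemma hasRedSpread_of_three {M : ℕ} {χ : Finset ℕ → Bool} (S e f g : Finset ℕ)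
    (hS : S ⊆ Finset.Icc 1 M) (hc : S.card = 4)
    (he : e ∈ S.powersetCard 3) (hf : f ∈ S.powersetCard 3) (hg : g ∈ S.powersetCard 3)
    (hef : e ≠ f) (heg : e ≠ g) (hfg : f ≠ g)
    (re : χ e = true) (rf : χ f = true) (rg : χ g = true) : HasRedSpread 3 4 3 M χ := by
  refine ⟨S, hS, hc, ?_⟩
  refine (Finset.card_eq_three.mpr ⟨e, f, g, hef, heg, hfg, rfl⟩).symm.le.trans
    (Finset.card_le_card ?_)
  intro t ht
  simp only [Finset.mem_insert, Finset.mem_singleton] at ht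
  rw [Finset.mem_filter]
  rcases ht with rfl | rfl | rfl <;> exact ⟨by assumption, by assumption⟩

lemma redSparse_of_not_hasRedSpread {M : ℕ} {χ : Finset ℕ → Bool}
    (h : ¬ HasRedSpread 3 4 3 M χ) : RedSparse M χ := by
  intro a b c d ha hab hbc hcd hd
  have hS : ({a, b, c, d} : Finset ℕ) ⊆ Finset.Icc 1 M := by
    intro t ht
    simp only [Finset.mem_insert, Finset.mem_singleton] at ht
    rw [Finset.mem_Icc]
    omega
  have hc : ({a, b, c, d} : Finset ℕ).card = 4 := by
    rw [Finset.card_insert_of_notMem (by simp; omega),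
      Finset.card_eq_three.mpr ⟨b, c, d, by omega, by omega, by omega, rfl⟩]
  have mem : ∀ x y z, x < y → y < z → ({x, y, z} : Finset ℕ) ⊆ {a, b, c, d} →
      ({x, y, z} : Finset ℕ) ∈ Finset.powersetCard 3 {a, b, c, d} := by
    intro x y z hxy hyz hs
    exact Finset.mem_powersetCard.mpr
      ⟨hs, Finset.card_eq_three.mpr ⟨x, y, z, by omega, by omega, by omega, rfl⟩⟩
  have m1 := mem a b c hab hbc
    (by intro t; simp only [Finset.mem_insert, Finset.mem_singleton]; tauto)
  have m2 := mem a b d hab (by omega)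
    (by intro t; simp only [Finset.mem_insert, Finset.mem_singleton]; tauto)
  have m3 := mem a c d (by omega) hcd
    (by intro t; simp only [Finset.mem_insert, Finset.mem_singleton]; tauto)
  have m4 := mem b c d hbc hcd
    (by intro t; simp only [Finset.mem_insert, Finset.mem_singleton]; tauto)
  -- two of the triples differ because one contains a vertex that the other misses
  have ne : ∀ (e f : Finset ℕ) (t : ℕ), t ∈ e → t ∉ f → e ≠ f := by
    rintro e f t h1 h2 rfl
    exact h2 h1
  have n12 : ({a, b, c} : Finset ℕ) ≠ {a, b, d} := ne _ _ c (by simp) (by simp; omega)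
  have n13 : ({a, b, c} : Finset ℕ) ≠ {a, c, d} := ne _ _ b (by simp) (by simp; omega)
  have n14 : ({a, b, c} : Finset ℕ) ≠ {b, c, d} := ne _ _ a (by simp) (by simp; omega)
  have n23 : ({a, b, d} : Finset ℕ) ≠ {a, c, d} := ne _ _ b (by simp) (by simp; omega)
  have n24 : ({a, b, d} : Finset ℕ) ≠ {b, c, d} := ne _ _ a (by simp) (by simp; omega)
  have n34 : ({a, c, d} : Finset ℕ) ≠ {b, c, d} := ne _ _ a (by simp) (by simp; omega)
  refine ⟨?_, ?_, ?_, ?_⟩ <;> intro r1 r2 <;> by_contra r3 <;>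
    rw [Bool.not_eq_false] at r3 <;> apply h
  · exact hasRedSpread_of_three _ _ _ _ hS hc m1 m2 m3 n12 n13 n23 r1 r2 r3
  · exact hasRedSpread_of_three _ _ _ _ hS hc m1 m2 m4 n12 n14 n24 r1 r2 r3
  · exact hasRedSpread_of_three _ _ _ _ hS hc m1 m3 m4 n13 n14 n34 r1 r2 r3
  · exact hasRedSpread_of_three _ _ _ _ hS hc m2 m3 m4 n23 n24 n34 r1 r2 r3

/-- A blue broom `B_{b+2,2}` in `{1,...,N}` with path `v 0 < ⋯ < v (b+1)` and leaves `p < q`.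
Only the first `b + 2` values of `v` matter. -/
def TwoBroom (χ : Finset ℕ → Bool) (b N : ℕ) : Prop :=
  ∃ (v : ℕ → ℕ) (p q : ℕ), StrictMono v ∧ 1 ≤ v 0 ∧ v (b + 1) < p ∧ p < q ∧ q ≤ N ∧
    (∀ j < b, χ {v j, v (j + 1), v (j + 2)} = false) ∧
    χ {v b, v (b + 1), p} = false ∧ χ {v b, v (b + 1), q} = false

lemma exists_strictMono_extend {v : ℕ → ℕ} (hv : StrictMono v) (k p : ℕ) (hp : v k < p) :
    ∃ u : ℕ → ℕ, StrictMono u ∧ (∀ i ≤ k, u i = v i) ∧ u (k + 1) = p := by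
  refine ⟨fun i => if i ≤ k then v i else p + (i - (k + 1)), ?_, ?_, ?_⟩
  · apply strictMono_nat_of_lt_succ
    intro i
    have h1 : v i < v (i + 1) := hv (Nat.lt_succ_self i)
    rcases lt_trichotomy i k with h | h | h
    · simp only [if_pos h.le, if_pos (Nat.succ_le_of_lt h)]
      exact h1
    · subst h
      simpa using hp
    · simp only [if_neg (show ¬ i ≤ k by omega), if_neg (show ¬ i + 1 ≤ k by omega)]
      omega
  · intro i hi
    simp [hi]
  · simp

/-- A blue tight path `v 0, ..., v (b+1), p` becomes a broom `B_{b+3,2}` when its last two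
vertices `v (b+1), p` have two blue extensions `s < t`. -/
lemma TwoBroom.extend {χ : Finset ℕ → Bool} {b N : ℕ} {v : ℕ → ℕ} {p s t : ℕ}
    (hv : StrictMono v) (h0 : 1 ≤ v 0) (hp : v (b + 1) < p)
    (hpath : ∀ j < b, χ {v j, v (j + 1), v (j + 2)} = false)
    (hb : χ {v b, v (b + 1), p} = false)
    (hps : p < s) (hst : s < t) (ht : t ≤ N)
    (hs' : χ {v (b + 1), p, s} = false) (ht' : χ {v (b + 1), p, t} = false) :
    TwoBroom χ (b + 1) N := by
  obtain ⟨u, hu, huv, hup⟩ := exists_strictMono_extend hv (b + 1) p hp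
  refine ⟨u, s, t, hu, ?_, ?_, hst, ht, ?_, ?_, ?_⟩
  · rwa [huv 0 (by omega)]
  · rwa [hup]
  · intro j hj
    rcases Nat.lt_succ_iff_lt_or_eq.mp hj with h | rfl
    · rw [huv j (by omega), huv (j + 1) (by omega), huv (j + 2) (by omega)]
      exact hpath j h
    · rw [huv j (by omega), huv (j + 1) le_rfl, hup]
      exact hb
  · rw [huv (b + 1) le_rfl, hup]
    exact hs'
  · rw [huv (b + 1) le_rfl, hup]
    exact ht'

/-- Dropping the first path vertex of a broom leaves a broom. -/
lemma TwoBroom.tail {χ : Finset ℕ → Bool} {b N : ℕ} (h : TwoBroom χ (b + 1) N) :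
    TwoBroom χ b N := by
  obtain ⟨v, p, q, hv, h0, hp, hpq, hq, hpath, h1, h2⟩ := h
  refine ⟨fun i => v (i + 1), p, q, ?_, ?_, hp, hpq, hq, ?_, h1, h2⟩
  · exact fun i j hij => hv (by omega)
  · exact h0.trans (hv.monotone (by omega))
  · exact fun j hj => hpath (j + 1) (by omega)

lemma TwoBroom.base {M : ℕ} {χ : Finset ℕ → Bool} (h : RedSparse M χ) (hM : 6 ≤ M) :
    TwoBroom χ 0 6 := by
  have mk : ∀ x y p q, 1 ≤ x → x < y → y < p → p < q → q ≤ 6 → χ {x, y, p} = false →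
      χ {x, y, q} = false → TwoBroom χ 0 6 := by
    intro x y p q hx hxy hyp hpq hq h1 h2
    refine ⟨fun i => if i = 0 then x else y + (i - 1), p, q, ?_, by simpa using hx,
      by simpa using hyp, hpq, hq, by simp, by simpa using h1, by simpa using h2⟩
    apply strictMono_nat_of_lt_succ
    intro i
    rcases i with _ | i <;> simp
    exact hxy
  have f1 := (h 1 2 3 4 (by omega) (by omega) (by omega) (by omega) (by omega)).1
  have f2 := (h 1 2 3 5 (by omega) (by omega) (by omega) (by omega) (by omega)).1
  have f3 := (h 1 2 3 6 (by omega) (by omega) (by omega) (by omega) (by omega)).1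
  have f4 := (h 1 2 4 5 (by omega) (by omega) (by omega) (by omega) (by omega)).1
  have f5 := (h 1 2 4 6 (by omega) (by omega) (by omega) (by omega) (by omega)).1
  have g := fun p q => mk 1 2 p q (by omega) (by omega)
  have g3 := fun p q => mk 1 3 p q (by omega) (by omega)
  have g4 := fun p q => mk 1 4 p q (by omega) (by omega)
  have a1 := g 3 4 (by omega) (by omega) (by omega)
  have a2 := g 3 5 (by omega) (by omega) (by omega)
  have a3 := g 3 6 (by omega) (by omega) (by omega)
  have a4 := g 4 5 (by omega) (by omega) (by omega)
  have a5 := g 4 6 (by omega) (by omega) (by omega)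
  have a6 := g 5 6 (by omega) (by omega) (by omega)
  have b1 := g3 4 5 (by omega) (by omega) (by omega)
  have b2 := g3 4 6 (by omega) (by omega) (by omega)
  have b3 := g3 5 6 (by omega) (by omega) (by omega)
  have c1 := g4 5 6 (by omega) (by omega) (by omega)
  clear mk g g3 g4
  cases e1 : χ {1, 2, 3} <;> cases e2 : χ {1, 2, 4} <;> cases e3 : χ {1, 2, 5} <;>
    cases e4 : χ {1, 2, 6} <;> simp_all

lemma TwoBroom.step {M b N : ℕ} {χ : Finset ℕ → Bool} (h : RedSparse M χ) (hM : N + 3 ≤ M)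
    (hB : TwoBroom χ b N) : TwoBroom χ (b + 1) (N + 3) := by
  obtain ⟨v, p, q, hv, h0, hp, hpq, hq, hpath, h1, h2⟩ := hB
  have hc0 : 1 ≤ v (b + 1) := h0.trans (hv.monotone (by omega))
  have extp := fun s t => TwoBroom.extend (s := s) (t := t) (N := N + 3) hv h0 hp hpath h1
  have extq := fun s t =>
    TwoBroom.extend (s := s) (t := t) (N := N + 3) hv h0 (hp.trans hpq) hpath h2
  -- the exceptional case: both pairs `(v_a, p)`, `(v_a, q)` are red to `s` and to `t`
  have exc : ∀ s t, q < s → s < t → t ≤ N + 3 → χ {v (b + 1), p, q} = false →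
      χ {v (b + 1), p, s} = true → χ {v (b + 1), p, t} = true →
      χ {v (b + 1), q, s} = true → χ {v (b + 1), q, t} = true → TwoBroom χ (b + 1) (N + 3) := by
    intro s t hs hst ht hb r1 r2 r3 r4
    have k1 := (h _ p q s hc0 hp hpq hs (by omega)).2.2.2 r1 r3
    have k2 := (h _ p q t hc0 hp hpq (by omega) (by omega)).2.2.2 r2 r4
    obtain ⟨u, hu, huv, hup⟩ := exists_strictMono_extend hv (b + 1) p hp
    apply TwoBroom.tail
    refine TwoBroom.extend (v := u) (p := q) (s := s) (t := t) hu ?_ ?_ ?_ ?_ hs hst ht ?_ ?_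
    · rwa [huv 0 (by omega)]
    · rwa [hup]
    · intro j hj
      rcases Nat.lt_succ_iff_lt_or_eq.mp hj with h | rfl
      · rw [huv j (by omega), huv (j + 1) (by omega), huv (j + 2) (by omega)]
        exact hpath j h
      · rw [huv j (by omega), huv (j + 1) le_rfl, hup]
        exact h1
    · rw [huv (b + 1) le_rfl, hup]
      exact hb
    · rw [hup]
      exact k1
    · rw [hup]
      exact k2
  have sp : ∀ s, q < s → s ≤ N + 3 → χ {v (b + 1), p, q} = true → χ {v (b + 1), p, s} = true →
      χ {v (b + 1), q, s} = false := fun s hs hs' =>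
    (h _ p q s hc0 hp hpq hs (by omega)).1
  have p1 := extp q (N + 1) hpq (by omega) (by omega)
  have p2 := extp q (N + 2) hpq (by omega) (by omega)
  have p3 := extp q (N + 3) hpq (by omega) (by omega)
  have p4 := extp (N + 1) (N + 2) (by omega) (by omega) (by omega)
  have p5 := extp (N + 1) (N + 3) (by omega) (by omega) (by omega)
  have p6 := extp (N + 2) (N + 3) (by omega) (by omega) (by omega)
  have q4 := extq (N + 1) (N + 2) (by omega) (by omega) (by omega)
  have q5 := extq (N + 1) (N + 3) (by omega) (by omega) (by omega)
  have q6 := extq (N + 2) (N + 3) (by omega) (by omega) (by omega)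
  have s1 := sp (N + 1) (by omega) (by omega)
  have s2 := sp (N + 2) (by omega) (by omega)
  have s3 := sp (N + 3) (by omega) (by omega)
  have x4 := exc (N + 1) (N + 2) (by omega) (by omega) (by omega)
  have x5 := exc (N + 1) (N + 3) (by omega) (by omega) (by omega)
  have x6 := exc (N + 2) (N + 3) (by omega) (by omega) (by omega)
  clear extp extq exc sp h1 h2 hpath
  generalize TwoBroom χ (b + 1) (N + 3) = T at *
  generalize χ {v (b + 1), p, q} = c0 at *
  generalize χ {v (b + 1), p, N + 1} = c1 at *
  generalize χ {v (b + 1), p, N + 2} = c2 at *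
  generalize χ {v (b + 1), p, N + 3} = c3 at *
  generalize χ {v (b + 1), q, N + 1} = d1 at *
  generalize χ {v (b + 1), q, N + 2} = d2 at *
  generalize χ {v (b + 1), q, N + 3} = d3 at *
  cases c0 <;> cases c1 <;> cases c2 <;> cases c3 <;> cases d1 <;> cases d2 <;> cases d3 <;>
    simp_all

lemma TwoBroom.exists {M : ℕ} {χ : Finset ℕ → Bool} (h : RedSparse M χ) (b : ℕ)
    (hM : 3 * b + 6 ≤ M) : TwoBroom χ b (3 * b + 6) := by
  induction b with
  | zero => exact TwoBroom.base h hM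
  | succ b ih => exact TwoBroom.step h (by omega) (ih (by omega))

lemma TwoBroom.hasBlueBroom {χ : Finset ℕ → Bool} {b N : ℕ} (h : TwoBroom χ b N) :
    HasBlueBroom 3 (b + 2) 2 N χ := by
  obtain ⟨v, p, q, hv, h0, hp, hpq, hq, hpath, h1, h2⟩ := h
  have hle : ∀ i < b + 2, v i ≤ v (b + 1) := fun i hi => hv.monotone (by omega)
  have h0' : ∀ i, 1 ≤ v i := fun i => h0.trans (hv.monotone (by omega))
  have img3 : ∀ j, ((Finset.range 3).image fun i => v (j + i)) = {v j, v (j + 1), v (j + 2)} := by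
    intro j
    ext t
    simp [Finset.range_add_one]
    tauto
  have img2 : ∀ t, insert t ((Finset.range 2).image fun i => v (b + i)) =
      {v b, v (b + 1), t} := by
    intro t
    ext s
    simp [Finset.range_add_one]
    tauto
  refine ⟨v, fun i => if i = 0 then p else q + (i - 1), hv, ?_, ?_, ?_, ?_, ?_, ?_⟩
  · apply strictMono_nat_of_lt_succ
    intro i
    rcases i with _ | i <;> simp
    exact hpq
  · intro i hi
    have := hle i hi
    have := h0' i
    rw [Finset.mem_Icc]
    omega
  · intro j hj
    rw [Finset.mem_Icc]
    interval_cases j <;> simp <;> omega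
  · intro i hi j hj
    have := hle i hi
    interval_cases j <;> simp <;> omega
  · intro j hj
    rw [img3]
    exact hpath j (by omega)
  · intro _ j hj
    simp only [Nat.add_sub_cancel, show 3 - 1 = 2 from rfl]
    rw [img2]
    interval_cases j
    · simpa using h1
    · simpa using h2

/-- For every integer `n ≥ 3`, `r_3(4, 3; B_{n−1,2}) ≤ 3n − 3`: every
red/blue coloring of the 3-element subsets of `{1,...,3n−3}` contains a blue ordered
copy of the 3-uniform broom `B_{n−1,2}` or a set of 4 vertices spanning at least 3 red
triples. -/
theorem stmt_12 :
    ∀ n : ℕ, 3 ≤ n →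
      spreadBroomRamsey3 (n - 1) 2 ≤ 3 * n - 3 ∧
      ∀ χ : Finset ℕ → Bool,
        HasBlueBroom 3 (n - 1) 2 (3 * n - 3) χ ∨ HasRedSpread 3 4 3 (3 * n - 3) χ := by
  intro n hn
  have key : ∀ χ : Finset ℕ → Bool,
      HasBlueBroom 3 (n - 1) 2 (3 * n - 3) χ ∨ HasRedSpread 3 4 3 (3 * n - 3) χ := by
    intro χ
    by_cases h : HasRedSpread 3 4 3 (3 * n - 3) χ
    · exact Or.inr h
    · left
      obtain ⟨b, rfl⟩ : ∃ b, n = b + 3 := ⟨n - 3, by omega⟩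
      have hN : 3 * (b + 3) - 3 = 3 * b + 6 := by omega
      rw [hN] at h ⊢
      exact (TwoBroom.exists (redSparse_of_not_hasRedSpread h) b le_rfl).hasBlueBroom
  exact ⟨Nat.sInf_le fun χ => (key χ).symm, key⟩
end

section
/- For every integer n ≥ 2, r_4(5, 4; P_n) ≥ 2^{n−2} + 1: there is a red/blue coloring of the 4-element subsets of {1,...,2^{n−2}} that contains no blue ordered copy of the 4-uniform tight path on n vertices and no set of 5 vertices spanning at least 4 red 4-element subsets. -/
/-! ### The labelling and the coloring -/

/-- The label of the triple `a < b < c` of elements of `{0, ..., 2 ^ m - 1}`, defined by splitting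
`{0, ..., 2 ^ (m + 1) - 1}` into its lower and upper half.  The label of type `AAB` occurs only
for `1 ≤ m`, so the truncation in `m - 1` is harmless. -/
def lab : ℕ → ℕ → ℕ → ℕ → ℕ
  | 0, _, _, _ => 0
  | m + 1, a, b, c =>
    if c < 2 ^ m then lab m a b c
    else if b < 2 ^ m then m - 1
    else if a < 2 ^ m then 0
    else lab m (a - 2 ^ m) (b - 2 ^ m) (c - 2 ^ m) + 1

lemma lab_lt (m : ℕ) : ∀ a b c, a < b → b < c → c < 2 ^ m → lab m a b c + 1 < m := by
  induction m with
  | zero => intro a b c h1 h2 h3; simp at h3; omega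
  | succ m ih =>
    intro a b c h1 h2 h3
    have hm : 1 < 2 ^ m → 1 ≤ m := by
      intro h
      by_contra hm
      have : m = 0 := by omega
      simp [this] at h
    rw [pow_succ] at h3
    have e1 := ih a b c h1 h2
    have e2 := ih (a - 2 ^ m) (b - 2 ^ m) (c - 2 ^ m)
    simp only [lab]
    split_ifs <;> omega

/-- Any four of the five quadruples of a 5-set include a blue one; equivalently, at least two
of the five quadruples are blue. -/
lemma two_blue (m : ℕ) : ∀ a b c d e, a < b → b < c → c < d → d < e → e < 2 ^ m →
    (lab m a b c < lab m b c d ∨ lab m a b c < lab m b c e ∨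
      lab m a b d < lab m b d e ∨ lab m a c d < lab m c d e) ∧
    (lab m a b c < lab m b c d ∨ lab m a b c < lab m b c e ∨
      lab m a b d < lab m b d e ∨ lab m b c d < lab m c d e) ∧
    (lab m a b c < lab m b c d ∨ lab m a b c < lab m b c e ∨
      lab m a c d < lab m c d e ∨ lab m b c d < lab m c d e) ∧
    (lab m a b c < lab m b c d ∨ lab m a b d < lab m b d e ∨
      lab m a c d < lab m c d e ∨ lab m b c d < lab m c d e) ∧
    (lab m a b c < lab m b c e ∨ lab m a b d < lab m b d e ∨
      lab m a c d < lab m c d e ∨ lab m b c d < lab m c d e) := by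
  induction m with
  | zero => intro a b c d e h1 h2 h3 h4 h5; simp at h5; omega
  | succ m ih =>
    intro a b c d e h1 h2 h3 h4 h5
    rw [pow_succ] at h5
    by_cases he : e < 2 ^ m
    · have := ih a b c d e h1 h2 h3 h4 he
      have hd : d < 2 ^ m := by omega
      have hc : c < 2 ^ m := by omega
      simpa only [lab, he, hd, hc, if_true] using this
    by_cases ha : a < 2 ^ m
    -- the labels inside the lower half lie below the top label `m - 1`
    · have k1 := lab_lt m a b c h1 h2
      have k2 := lab_lt m a b d h1 (by omega)
      have k3 := lab_lt m a c d (by omega) h3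
      have k4 := lab_lt m b c d h2 h3
      by_cases hb : b < 2 ^ m <;> by_cases hc : c < 2 ^ m <;> by_cases hd : d < 2 ^ m <;>
        simp only [lab, he, ha, hb, hc, hd, if_true, if_false] <;> omega
    · have := ih (a - 2 ^ m) (b - 2 ^ m) (c - 2 ^ m) (d - 2 ^ m) (e - 2 ^ m)
        (by omega) (by omega) (by omega) (by omega) (by omega)
      have hb : ¬ b < 2 ^ m := by omega
      have hc : ¬ c < 2 ^ m := by omega
      have hd : ¬ d < 2 ^ m := by omega
      simpa only [lab, he, ha, hb, hc, hd, if_false, Nat.add_lt_add_iff_right] using this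

/-- The coloring of the quadruples of `{1, ..., 2 ^ m}`: red means that the labels do not
increase.  Vertices are shifted by one, since `lab` works on `{0, ..., 2 ^ m - 1}`.  Sets that do
not have four elements are blue, which is irrelevant. -/
def col (m : ℕ) (S : Finset ℕ) : Bool :=
  match S.sort (· ≤ ·) with
  | [a, b, c, d] => decide (lab m (b - 1) (c - 1) (d - 1) ≤ lab m (a - 1) (b - 1) (c - 1))
  | _ => false

lemma col_eq_false (m a b c d : ℕ) (h1 : a < b) (h2 : b < c) (h3 : c < d) :
    col m {a, b, c, d} = false ↔
      lab m (a - 1) (b - 1) (c - 1) < lab m (b - 1) (c - 1) (d - 1) := by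
  have hs : ({a, b, c, d} : Finset ℕ).sort (· ≤ ·) = [a, b, c, d] := by
    have : ({a, b, c, d} : Finset ℕ) = [a, b, c, d].toFinset := by simp
    rw [this]
    refine (List.toFinset_sort (· ≤ ·) ?_).2 ?_
    · simp; omega
    · simp; omega
  simp [col, hs]

lemma no_blue_path (n : ℕ) (hn : 2 ≤ n) :
    ¬ HasBlueTightPath 4 n (2 ^ (n - 2)) (col (n - 2)) := by
  rintro ⟨x, hx, hmem, hblue⟩
  simp only [Finset.mem_Icc] at hmem
  obtain rfl | hn3 : n = 2 ∨ 3 ≤ n := by omega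
  · have h0 := hmem 0 (by omega)
    have h1 := hmem 1 (by omega)
    have h2 := hx (show 0 < 1 by omega)
    simp at h0 h1
    omega
  have lt : ∀ i, x i < x (i + 1) := fun i => hx (by omega)
  have key : ∀ j, j + 3 ≤ n →
      j ≤ lab (n - 2) (x j - 1) (x (j + 1) - 1) (x (j + 2) - 1) := by
    intro j
    induction j with
    | zero => intro _; omega
    | succ j ih =>
      intro hj
      have h := hblue j (by omega)
      have himg : ((Finset.range 4).image fun i => x (j + i)) =
          {x j, x (j + 1), x (j + 2), x (j + 3)} := by
        simp [Finset.range_add_one]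
        grind
      have h' := (col_eq_false _ _ _ _ _ (lt j) (lt (j + 1)) (lt (j + 2))).1 (himg ▸ h)
      have := ih (by omega)
      simp only [add_assoc, Nat.reduceAdd] at h' ⊢
      omega
  obtain ⟨j, rfl⟩ : ∃ j, n = j + 3 := ⟨n - 3, by omega⟩
  have h := key j le_rfl
  have h0 := hmem j (by omega)
  have h1 := hmem (j + 1) (by omega)
  have h2 := hmem (j + 2) (by omega)
  have := lt j
  have := lt (j + 1)
  rw [show j + 1 + 1 = j + 2 by omega] at this
  have := lab_lt (j + 3 - 2) (x j - 1) (x (j + 1) - 1) (x (j + 2) - 1)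
    (by omega) (by omega) (by omega)
  omega

/-- A 5-set with two distinct blue quadruples spans at most three red ones. -/
lemma card_red_lt (χ : Finset ℕ → Bool) (S : Finset ℕ) (hS : S.card = 5) (p q : Finset ℕ)
    (hp : p ∈ Finset.powersetCard 4 S) (hq : q ∈ Finset.powersetCard 4 S) (hpq : p ≠ q)
    (hp' : χ p = false) (hq' : χ q = false) :
    ((Finset.powersetCard 4 S).filter fun e => χ e = true).card < 4 := by
  have hsub : ((Finset.powersetCard 4 S).filter fun e => χ e = true) ⊆
      ((Finset.powersetCard 4 S).erase p).erase q := by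
    intro e he
    simp only [Finset.mem_filter] at he
    simp only [Finset.mem_erase]
    refine ⟨?_, ?_, he.1⟩ <;> rintro rfl <;> simp_all
  have h1 := Finset.card_le_card hsub
  rw [Finset.card_erase_of_mem (Finset.mem_erase.2 ⟨hpq.symm, hq⟩),
    Finset.card_erase_of_mem hp, Finset.card_powersetCard, hS] at h1
  have : Nat.choose 5 4 = 5 := by decide
  omega

lemma two_of_five {p₁ p₂ p₃ p₄ p₅ : Prop}
    (h : (p₁ ∨ p₂ ∨ p₃ ∨ p₄) ∧ (p₁ ∨ p₂ ∨ p₃ ∨ p₅) ∧ (p₁ ∨ p₂ ∨ p₄ ∨ p₅) ∧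
      (p₁ ∨ p₃ ∨ p₄ ∨ p₅) ∧ (p₂ ∨ p₃ ∨ p₄ ∨ p₅)) :
    p₁ ∧ p₂ ∨ p₁ ∧ p₃ ∨ p₁ ∧ p₄ ∨ p₁ ∧ p₅ ∨ p₂ ∧ p₃ ∨ p₂ ∧ p₄ ∨ p₂ ∧ p₅ ∨
      p₃ ∧ p₄ ∨ p₃ ∧ p₅ ∨ p₄ ∧ p₅ := by
  grind

lemma no_red_spread (m : ℕ) : ¬ HasRedSpread 4 5 4 (2 ^ m) (col m) := by
  rintro ⟨S, hS, hcard, hred⟩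
  obtain ⟨a, b, c, d, e, h1, h2, h3, h4, rfl⟩ : ∃ a b c d e, a < b ∧ b < c ∧ c < d ∧ d < e ∧
      S = {a, b, c, d, e} := by
    let f := S.orderEmbOfFin hcard
    have lt : ∀ i j : Fin 5, i < j → f i < f j := fun i j h => f.strictMono h
    refine ⟨f 0, f 1, f 2, f 3, f 4, lt _ _ (by decide), lt _ _ (by decide), lt _ _ (by decide),
      lt _ _ (by decide), ?_⟩
    have := Finset.image_orderEmbOfFin_univ S hcard
    conv_lhs => rw [← this]
    have hu : (Finset.univ : Finset (Fin 5)) = {0, 1, 2, 3, 4} := by decide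
    simp [hu, f]
  have ha := hS (show a ∈ _ by simp)
  have he := hS (show e ∈ _ by simp)
  rw [Finset.mem_Icc] at ha he
  have key := two_blue m (a - 1) (b - 1) (c - 1) (d - 1) (e - 1)
    (by omega) (by omega) (by omega) (by omega) (by omega)
  rw [← col_eq_false m a b c d (by omega) (by omega) (by omega),
    ← col_eq_false m a b c e (by omega) (by omega) (by omega),
    ← col_eq_false m a b d e (by omega) (by omega) (by omega),
    ← col_eq_false m a c d e (by omega) (by omega) (by omega),
    ← col_eq_false m b c d e (by omega) (by omega) (by omega)] at key
  have mem : ∀ v w x y, v < w → w < x → x < y → v ∈ ({a, b, c, d, e} : Finset ℕ) →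
      w ∈ ({a, b, c, d, e} : Finset ℕ) → x ∈ ({a, b, c, d, e} : Finset ℕ) →
      y ∈ ({a, b, c, d, e} : Finset ℕ) →
      ({v, w, x, y} : Finset ℕ) ∈ Finset.powersetCard 4 {a, b, c, d, e} := by
    intro v w x y hvw hwx hxy hv hw hx hy
    rw [Finset.mem_powersetCard]
    refine ⟨?_, ?_⟩
    · intro z hz
      simp only [Finset.mem_insert, Finset.mem_singleton] at hz
      rcases hz with rfl | rfl | rfl | rfl <;> assumption
    · rw [Finset.card_insert_of_notMem, Finset.card_insert_of_notMem,
        Finset.card_insert_of_notMem, Finset.card_singleton] <;> simp <;> omega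
  have m1 := mem a b c d h1 h2 h3 (by simp) (by simp) (by simp) (by simp)
  have m2 := mem a b c e h1 h2 (by omega) (by simp) (by simp) (by simp) (by simp)
  have m3 := mem a b d e h1 (by omega) h4 (by simp) (by simp) (by simp) (by simp)
  have m4 := mem a c d e (by omega) h3 h4 (by simp) (by simp) (by simp) (by simp)
  have m5 := mem b c d e h2 h3 h4 (by simp) (by simp) (by simp) (by simp)
  -- the quadruples are told apart by the vertex they omit
  have t1 : e ∉ ({a, b, c, d} : Finset ℕ) := by simp; omega
  have t2 : d ∉ ({a, b, c, e} : Finset ℕ) := by simp; omega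
  have t3 : c ∉ ({a, b, d, e} : Finset ℕ) := by simp; omega
  have t4 : b ∉ ({a, c, d, e} : Finset ℕ) := by simp; omega
  have red : ∀ p q, p ∈ Finset.powersetCard 4 {a, b, c, d, e} →
      q ∈ Finset.powersetCard 4 {a, b, c, d, e} → p ≠ q → col m p = false →
      col m q = false → False := fun p q hp hq hpq hp' hq' =>
    not_le.2 (card_red_lt (col m) _ hcard p q hp hq hpq hp' hq') hred
  rcases two_of_five key with h | h | h | h | h | h | h | h | h | h
  · exact red _ _ m1 m2 (fun h => t1 (by rw [h]; simp)) h.1 h.2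
  · exact red _ _ m1 m3 (fun h => t1 (by rw [h]; simp)) h.1 h.2
  · exact red _ _ m1 m4 (fun h => t1 (by rw [h]; simp)) h.1 h.2
  · exact red _ _ m1 m5 (fun h => t1 (by rw [h]; simp)) h.1 h.2
  · exact red _ _ m2 m3 (fun h => t2 (by rw [h]; simp)) h.1 h.2
  · exact red _ _ m2 m4 (fun h => t2 (by rw [h]; simp)) h.1 h.2
  · exact red _ _ m2 m5 (fun h => t2 (by rw [h]; simp)) h.1 h.2
  · exact red _ _ m3 m4 (fun h => t3 (by rw [h]; simp)) h.1 h.2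
  · exact red _ _ m3 m5 (fun h => t3 (by rw [h]; simp)) h.1 h.2
  · exact red _ _ m4 m5 (fun h => t4 (by rw [h]; simp)) h.1 h.2

/-! ### Finite Ramsey theorem -/

/-- The induction step of Ramsey's theorem, before the pigeonhole principle: if the theorem holds
for `k`-sets, then every large set contains a `t`-set in which the color of a `(k + 1)`-set depends
only on its smallest element.  Repeatedly, the minimum is split off and the rest is thinned out to
a set homogeneous for the link of that minimum. -/
lemma ramsey_prehomogeneous (k : ℕ)
    (hk : ∀ s, ∃ N, ∀ (f : Finset ℕ → Bool) (A : Finset ℕ), N ≤ A.card →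
      ∃ S ⊆ A, S.card = s ∧ ∃ c, ∀ e ⊆ S, e.card = k → f e = c) (t : ℕ) :
    ∃ N, ∀ (f : Finset ℕ → Bool) (A : Finset ℕ), N ≤ A.card →
      ∃ T ⊆ A, T.card = t ∧ ∃ g : ℕ → Bool, ∀ x ∈ T, ∀ e ⊆ T, (∀ y ∈ e, x < y) →
        e.card = k → f (insert x e) = g x := by
  induction t with
  | zero => exact ⟨0, fun f A _ => ⟨∅, by simp, by simp, fun _ => true, by simp⟩⟩
  | succ t ih =>
    obtain ⟨M, hM⟩ := ih
    obtain ⟨N, hN⟩ := hk M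
    refine ⟨N + 1, fun f A hA => ?_⟩
    have hne : A.Nonempty := Finset.card_pos.1 (by omega)
    have ha := A.min'_mem hne
    obtain ⟨B, hBA, hB, c, hc⟩ := hN (fun e => f (insert (A.min' hne) e)) (A.erase (A.min' hne))
      (by rw [Finset.card_erase_of_mem ha]; omega)
    obtain ⟨T, hTB, hT, g, hg⟩ := hM f B hB.ge
    have hlt : ∀ y ∈ T, A.min' hne < y := fun y hy => by
      have := Finset.mem_erase.1 (hBA (hTB hy))
      exact lt_of_le_of_ne (A.min'_le y this.2) (Ne.symm this.1)
    have hnot : A.min' hne ∉ T := fun h => lt_irrefl _ (hlt _ h)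
    refine ⟨insert (A.min' hne) T, ?_, by rw [Finset.card_insert_of_notMem hnot, hT],
      fun x => if x = A.min' hne then c else g x, ?_⟩
    · exact Finset.insert_subset ha
        ((hTB.trans hBA).trans (Finset.erase_subset _ _))
    · intro x hx e he hxe hcard
      have hmin : A.min' hne ≤ x := by
        rcases Finset.mem_insert.1 hx with h | h
        · exact h.ge
        · exact (hlt x h).le
      have heT : e ⊆ T := fun y hy => by
        rcases Finset.mem_insert.1 (he hy) with h | h
        · have := hxe y hy
          omega
        · exact h
      by_cases hxa : x = A.min' hne
      · simp only [hxa, if_true]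
        exact hc e (heT.trans hTB) hcard
      · simp only [hxa, if_false]
        exact hg x ((Finset.mem_insert.1 hx).resolve_left hxa) e heT hxe hcard

lemma ramsey (k : ℕ) : ∀ s, ∃ N, ∀ (f : Finset ℕ → Bool) (A : Finset ℕ), N ≤ A.card →
    ∃ S ⊆ A, S.card = s ∧ ∃ c, ∀ e ⊆ S, e.card = k → f e = c := by
  induction k with
  | zero =>
    intro s
    refine ⟨s, fun f A hA => ?_⟩
    obtain ⟨S, hS, hs⟩ := Finset.exists_subset_card_eq hA
    refine ⟨S, hS, hs, f ∅, fun e _ he => ?_⟩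
    rw [Finset.card_eq_zero.1 he]
  | succ k ih =>
    intro s
    obtain ⟨N, hN⟩ := ramsey_prehomogeneous k ih (2 * s)
    refine ⟨N, fun f A hA => ?_⟩
    obtain ⟨T, hTA, hT, g, hg⟩ := hN f A hA
    obtain ⟨c, hc⟩ : ∃ c, s ≤ (T.filter fun x => g x = c).card := by
      by_contra! h
      have h1 := h true
      have h2 := h false
      have h3 := Finset.card_filter_add_card_filter_not (s := T) (fun x => g x = true)
      simp only [Bool.not_eq_true] at h3
      omega
    obtain ⟨S, hS, hs⟩ := Finset.exists_subset_card_eq hc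
    have hST : S ⊆ T := hS.trans (Finset.filter_subset _ _)
    refine ⟨S, hST.trans hTA, hs, c, fun e he hcard => ?_⟩
    have hne : e.Nonempty := Finset.card_pos.1 (by omega)
    have hm := e.min'_mem hne
    have h := hg (e.min' hne) (hST (he hm)) (e.erase (e.min' hne))
      ((Finset.erase_subset _ _).trans (he.trans hST))
      (fun y hy => e.min'_lt_of_mem_erase_min' hne hy)
      (by rw [Finset.card_erase_of_mem hm]; omega)
    rw [Finset.insert_erase hm] at h
    rw [h]
    exact (Finset.mem_filter.1 (hS (he hm))).2

lemma exists_spread_or_path (n : ℕ) :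
    ∃ N, ∀ χ : Finset ℕ → Bool, HasRedSpread 4 5 4 N χ ∨ HasBlueTightPath 4 n N χ := by
  obtain ⟨N, hN⟩ := ramsey 4 (n + 5)
  refine ⟨N, fun χ => ?_⟩
  obtain ⟨S, hS, hs, c, hc⟩ := hN χ (Finset.Icc 1 N) (by simp)
  cases c with
  | true =>
    left
    obtain ⟨T, hTS, hT⟩ := Finset.exists_subset_card_eq (show 5 ≤ S.card by omega)
    refine ⟨T, hTS.trans hS, hT, ?_⟩
    rw [Finset.filter_true_of_mem, Finset.card_powersetCard, hT]
    · decide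
    · intro e he
      rw [Finset.mem_powersetCard] at he
      exact hc e (he.1.trans hTS) he.2
  | false =>
    right
    obtain ⟨T, hTS, hT⟩ := Finset.exists_subset_card_eq (show n ≤ S.card by omega)
    -- the increasing enumeration of `T`, continued beyond `N` to be strictly increasing on `ℕ`
    let x : ℕ → ℕ := fun i => if h : i < n then T.orderEmbOfFin hT ⟨i, h⟩ else N + 1 + i
    have hxT : ∀ i < n, x i ∈ T := fun i hi => by
      simp only [x, hi, dif_pos]
      exact T.orderEmbOfFin_mem hT _
    have hxI : ∀ i < n, x i ∈ Finset.Icc 1 N := fun i hi => hS (hTS (hxT i hi))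
    have hx : StrictMono x := by
      intro i j hij
      by_cases hj : j < n
      · have hi : i < n := by omega
        simp only [x, hi, hj, dif_pos]
        exact (T.orderEmbOfFin hT).strictMono hij
      · have hxj : x j = N + 1 + j := by simp [x, hj]
        by_cases hi : i < n
        · have := (Finset.mem_Icc.1 (hxI i hi)).2
          omega
        · have hxi : x i = N + 1 + i := by simp [x, hi]
          omega
    refine ⟨x, hx, hxI, fun j hj => hc _ ?_ ?_⟩
    · intro y hy
      obtain ⟨i, hi, rfl⟩ := Finset.mem_image.1 hy
      rw [Finset.mem_range] at hi
      exact hTS (hxT _ (by omega))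
    · rw [Finset.card_image_of_injective, Finset.card_range]
      intro i i' h
      have := hx.injective h
      omega

lemma HasRedSpread.mono {k s t M N : ℕ} {χ : Finset ℕ → Bool} (hMN : M ≤ N)
    (h : HasRedSpread k s t M χ) : HasRedSpread k s t N χ := by
  obtain ⟨S, hS, h⟩ := h
  exact ⟨S, hS.trans (Finset.Icc_subset_Icc_right hMN), h⟩

lemma HasBlueTightPath.mono {k n M N : ℕ} {χ : Finset ℕ → Bool} (hMN : M ≤ N)
    (h : HasBlueTightPath k n M χ) : HasBlueTightPath k n N χ := by
  obtain ⟨x, hx, hmem, h⟩ := h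
  exact ⟨x, hx, fun i hi => Finset.Icc_subset_Icc_right hMN (hmem i hi), h⟩

/-- For every integer `n ≥ 2`, `r_4(5, 4; P_n) ≥ 2^{n−2} + 1`: there is
a red/blue coloring of the 4-element subsets of `{1,...,2^{n−2}}` containing no blue
ordered 4-uniform tight path on `n` vertices and no set of 5 vertices spanning at least
4 red 4-element subsets. -/
theorem stmt_14 :
    ∀ n : ℕ, 2 ≤ n →
      2 ^ (n - 2) + 1 ≤ spreadPathRamsey 4 5 4 n ∧
      ∃ χ : Finset ℕ → Bool,
        ¬ HasBlueTightPath 4 n (2 ^ (n - 2)) χ ∧ ¬ HasRedSpread 4 5 4 (2 ^ (n - 2)) χ := by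
  intro n hn
  refine ⟨?_, col (n - 2), no_blue_path n hn, no_red_spread (n - 2)⟩
  rw [Nat.succ_le_iff, spreadPathRamsey]
  by_contra! hle
  have hmem := Nat.sInf_mem (exists_spread_or_path n)
  rcases hmem (col (n - 2)) with h | h
  · exact no_red_spread (n - 2) (h.mono hle)
  · exact no_blue_path n hn (h.mono hle)
end
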